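/- arXiv:2203.00342 — 3 statements merged into one kernel-verified Lean document; each statement's English description precedes it below -/
import Mathlib

section
/- Let d ≥ 1, let μ > 0 and L > 0, and let f : ℝ^d → ℝ be a differentiable function in RSI⁻(μ) ∩ EB⁺(L). Starting from any x₀ ∈ ℝ^d, define x₁ = x₀ − (1/(2μ))·∇f(x₀) and x_{i+1} = x_i − (μ/L²)·∇f(x_i) for i ≥ 1. Then for every i ≥ 1, ‖x_i − x_i^*‖² ≤ (‖∇f(x₀)‖²/(4μ²)) · (1 − μ²/L²)^{i−1}, where x_i^* denotes the orthogonal projection of x_i onto the set of global minimizers of f. -/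
noncomputable section

open RealInnerProductSpace

/-- The set of global minimizers of `f`. -/
def argminSet {d : ℕ} (f : EuclideanSpace ℝ (Fin d) → ℝ) :
    Set (EuclideanSpace ℝ (Fin d)) := {z | ∀ y, f z ≤ f y}

/-- `p` is the orthogonal projection map onto the set `X` : for each `x`, `p x` is a
nearest point to `x` in `X`. -/
def IsProjOn {d : ℕ} (p : EuclideanSpace ℝ (Fin d) → EuclideanSpace ℝ (Fin d))
    (X : Set (EuclideanSpace ℝ (Fin d))) : Prop :=
  ∀ x, p x ∈ X ∧ ∀ y ∈ X, ‖x - p x‖ ≤ ‖x - y‖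

/-- `f` is a differentiable function, whose set of global minimizers is nonempty, closed
and convex, belonging to `RSI⁻(μ) ∩ EB⁺(L)`. -/
def MemRSIEB {d : ℕ} (μ L : ℝ) (f : EuclideanSpace ℝ (Fin d) → ℝ) : Prop :=
  Differentiable ℝ f ∧ (argminSet f).Nonempty ∧ IsClosed (argminSet f) ∧
    Convex ℝ (argminSet f) ∧
    ∃ p, IsProjOn p (argminSet f) ∧
      (∀ x, μ * ‖x - p x‖ ^ 2 ≤ ⟪gradient f x, x - p x⟫) ∧
      (∀ x, ‖gradient f x‖ ≤ L * ‖x - p x‖)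

/-!
Write `r y = ‖y - p y‖`. Moving along `-a • g y` and comparing with the old projection `p y`, the
restricted secant inequality gives
`r (y - a • g y) ^ 2 ≤ (1 - 2 * a * μ) * r y ^ 2 + a ^ 2 * ‖g y‖ ^ 2`.
The first step size `a = 1 / (2 * μ)` cancels the unknown distance `r y`, so that only the observed
gradient remains. Afterwards `‖g y‖ ≤ L * r y` turns the bound into the factor
`1 - 2 * a * μ + a ^ 2 * L ^ 2`, which is minimal at `a = μ / L ^ 2`, with value
`1 - μ ^ 2 / L ^ 2`. This factor can be negative only if `L < μ`, and then `r` vanishes identically.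
-/

theorem one_sub_sq_div_sq_nonneg {a b : ℝ} (ha : 0 ≤ a) (hab : a ≤ b) :
    0 ≤ 1 - a ^ 2 / b ^ 2 := by
  rw [← div_pow, sub_nonneg]
  exact pow_le_one₀ (div_nonneg ha (ha.trans hab)) (div_le_one_of_le₀ hab (ha.trans hab))

section GradientMethod

variable {E : Type*} [NormedAddCommGroup E] {X : Set E} {p g : E → E} {μ L : ℝ}

/-- `p` selects a nearest point of `X` to each point of `E`: the orthogonal projection onto `X` when
`X` is a nonempty closed convex set, a possibly discontinuous choice in general. -/
def IsNearestPointMap (p : E → E) (X : Set E) : Prop :=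
  ∀ x, p x ∈ X ∧ ∀ y ∈ X, ‖x - p x‖ ≤ ‖x - y‖

/-- The upper error bound `EB⁺(L)`, for a vector field `g` in the role of the gradient and a map `p`
in the role of the projection onto the minimizers. -/
def UpperErrorBound (L : ℝ) (g p : E → E) : Prop :=
  ∀ x, ‖g x‖ ≤ L * ‖x - p x‖

theorem UpperErrorBound.eq_zero_of_eq (hEB : UpperErrorBound L g p) {y : E} (hy : y = p y) :
    g y = 0 := by
  have h_norm := hEB y
  rwa [sub_eq_zero.mpr hy, norm_zero, mul_zero, norm_le_zero_iff] at h_norm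

variable [InnerProductSpace ℝ E]

/-- The lower restricted secant inequality `RSI⁻(μ)`, for a vector field `g` in the role of the
gradient and a map `p` in the role of the projection onto the minimizers. -/
def LowerRestrictedSecant (μ : ℝ) (g p : E → E) : Prop :=
  ∀ x, μ * ‖x - p x‖ ^ 2 ≤ ⟪g x, x - p x⟫

theorem LowerRestrictedSecant.eq_of_lt (hRSI : LowerRestrictedSecant μ g p)
    (hEB : UpperErrorBound L g p) (hLμ : L < μ) (y : E) : y = p y := by
  have h_sq : μ * ‖y - p y‖ ^ 2 ≤ L * ‖y - p y‖ ^ 2 :=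
    calc μ * ‖y - p y‖ ^ 2 ≤ ⟪g y, y - p y⟫ := hRSI y
      _ ≤ ‖g y‖ * ‖y - p y‖ := real_inner_le_norm _ _
      _ ≤ L * ‖y - p y‖ * ‖y - p y‖ := by gcongr; exact hEB y
      _ = L * ‖y - p y‖ ^ 2 := by ring
  by_contra hy
  have h_pos : 0 < ‖y - p y‖ := norm_pos_iff.mpr (sub_ne_zero.mpr hy)
  exact hLμ.not_ge (le_of_mul_le_mul_right h_sq (by positivity))

theorem norm_sub_smul_sq_real (v w : E) (a : ℝ) :
    ‖v - a • w‖ ^ 2 = ‖v‖ ^ 2 - 2 * a * ⟪w, v⟫ + a ^ 2 * ‖w‖ ^ 2 := by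
  rw [norm_sub_sq_real, real_inner_smul_right, real_inner_comm, norm_smul, mul_pow,
    Real.norm_eq_abs, sq_abs, mul_assoc]

theorem IsNearestPointMap.sq_norm_step_le (hp : IsNearestPointMap p X)
    (hRSI : LowerRestrictedSecant μ g p) {a : ℝ} (ha : 0 ≤ a) {y z : E} (hz : z = y - a • g y) :
    ‖z - p z‖ ^ 2 ≤ (1 - 2 * a * μ) * ‖y - p y‖ ^ 2 + a ^ 2 * ‖g y‖ ^ 2 :=
  calc ‖z - p z‖ ^ 2 ≤ ‖z - p y‖ ^ 2 := by gcongr; exact (hp z).2 _ (hp y).1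
    _ = ‖y - p y‖ ^ 2 - 2 * a * ⟪g y, y - p y⟫ + a ^ 2 * ‖g y‖ ^ 2 := by
      rw [hz, sub_right_comm, norm_sub_smul_sq_real]
    _ ≤ ‖y - p y‖ ^ 2 - 2 * a * (μ * ‖y - p y‖ ^ 2) + a ^ 2 * ‖g y‖ ^ 2 := by
      gcongr; exact hRSI y
    _ = (1 - 2 * a * μ) * ‖y - p y‖ ^ 2 + a ^ 2 * ‖g y‖ ^ 2 := by ring

theorem IsNearestPointMap.sq_norm_initial_step_le (hp : IsNearestPointMap p X)
    (hRSI : LowerRestrictedSecant μ g p) (hμ : 0 < μ) {y z : E}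
    (hz : z = y - (1 / (2 * μ)) • g y) :
    ‖z - p z‖ ^ 2 ≤ ‖g y‖ ^ 2 / (4 * μ ^ 2) := by
  refine (hp.sq_norm_step_le hRSI (by positivity) hz).trans_eq ?_
  field_simp
  ring

theorem IsNearestPointMap.sq_norm_step_le_mul (hp : IsNearestPointMap p X)
    (hRSI : LowerRestrictedSecant μ g p) (hEB : UpperErrorBound L g p) (hμ : 0 ≤ μ) (hL : L ≠ 0)
    {y z : E} (hz : z = y - (μ / L ^ 2) • g y) :
    ‖z - p z‖ ^ 2 ≤ (1 - μ ^ 2 / L ^ 2) * ‖y - p y‖ ^ 2 := by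
  refine (hp.sq_norm_step_le hRSI (by positivity) hz).trans ?_
  calc (1 - 2 * (μ / L ^ 2) * μ) * ‖y - p y‖ ^ 2 + (μ / L ^ 2) ^ 2 * ‖g y‖ ^ 2
      ≤ (1 - 2 * (μ / L ^ 2) * μ) * ‖y - p y‖ ^ 2
          + (μ / L ^ 2) ^ 2 * (L * ‖y - p y‖) ^ 2 := by gcongr; exact hEB y
    _ = (1 - μ ^ 2 / L ^ 2) * ‖y - p y‖ ^ 2 := by
      field_simp
      ring

theorem IsNearestPointMap.sq_norm_iterate_le (hp : IsNearestPointMap p X)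
    (hRSI : LowerRestrictedSecant μ g p) (hEB : UpperErrorBound L g p) (hμ : 0 < μ) (hμL : μ ≤ L)
    {y : ℕ → E} (hy : ∀ n, y (n + 1) = y n - (μ / L ^ 2) • g (y n)) (n : ℕ) :
    ‖y n - p (y n)‖ ^ 2 ≤ (1 - μ ^ 2 / L ^ 2) ^ n * ‖y 0 - p (y 0)‖ ^ 2 :=
  le_geom (u := fun k ↦ ‖y k - p (y k)‖ ^ 2) (one_sub_sq_div_sq_nonneg hμ.le hμL) n fun k _ ↦
    hp.sq_norm_step_le_mul hRSI hEB hμ.le (hμ.trans_le hμL).ne' (hy k)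

theorem stmt_1_general (hp : IsNearestPointMap p X) (hRSI : LowerRestrictedSecant μ g p)
    (hEB : UpperErrorBound L g p) (hμ : 0 < μ) {x : ℕ → E}
    (hx1 : x 1 = x 0 - (1 / (2 * μ)) • g (x 0))
    (hx : ∀ i, 1 ≤ i → x (i + 1) = x i - (μ / L ^ 2) • g (x i)) {i : ℕ} (hi : 1 ≤ i) :
    ‖x i - p (x i)‖ ^ 2 ≤ ‖g (x 0)‖ ^ 2 / (4 * μ ^ 2) * (1 - μ ^ 2 / L ^ 2) ^ (i - 1) := by
  obtain ⟨n, rfl⟩ := Nat.exists_eq_add_of_le' hi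
  rcases lt_or_ge L μ with hLμ | hμL
  · have h_fixed := hRSI.eq_of_lt hEB hLμ
    simp [sub_eq_zero.mpr (h_fixed (x (n + 1))), hEB.eq_zero_of_eq (h_fixed (x 0))]
  · have h_tail := hp.sq_norm_iterate_le hRSI hEB hμ hμL (y := fun k ↦ x (k + 1))
      (fun k ↦ hx (k + 1) k.succ_pos) n
    have h_factor := one_sub_sq_div_sq_nonneg hμ.le hμL
    calc ‖x (n + 1) - p (x (n + 1))‖ ^ 2
        ≤ (1 - μ ^ 2 / L ^ 2) ^ n * ‖x 1 - p (x 1)‖ ^ 2 := h_tail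
      _ ≤ (1 - μ ^ 2 / L ^ 2) ^ n * (‖g (x 0)‖ ^ 2 / (4 * μ ^ 2)) := by
        gcongr; exact hp.sq_norm_initial_step_le hRSI hμ hx1
      _ = ‖g (x 0)‖ ^ 2 / (4 * μ ^ 2) * (1 - μ ^ 2 / L ^ 2) ^ n := mul_comm _ _

end GradientMethod

/-- Convergence rate of gradient descent with first step size `1/(2μ)`
and step size `μ/L²` afterwards, on `RSI⁻(μ) ∩ EB⁺(L)`. -/
theorem stmt_1 {d : ℕ} (hd : 1 ≤ d) (μ L : ℝ) (hμ : 0 < μ) (hL : 0 < L)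
    (f : EuclideanSpace ℝ (Fin d) → ℝ) (hf : Differentiable ℝ f)
    (hne : (argminSet f).Nonempty) (hcl : IsClosed (argminSet f))
    (hcv : Convex ℝ (argminSet f))
    (p : EuclideanSpace ℝ (Fin d) → EuclideanSpace ℝ (Fin d))
    (hp : IsProjOn p (argminSet f))
    (hRSI : ∀ x, μ * ‖x - p x‖ ^ 2 ≤ ⟪gradient f x, x - p x⟫)
    (hEB : ∀ x, ‖gradient f x‖ ≤ L * ‖x - p x‖)
    (x₀ : EuclideanSpace ℝ (Fin d)) (x : ℕ → EuclideanSpace ℝ (Fin d))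
    (hx0 : x 0 = x₀)
    (hx1 : x 1 = x 0 - (1 / (2 * μ)) • gradient f (x 0))
    (hx : ∀ i, 1 ≤ i → x (i + 1) = x i - (μ / L ^ 2) • gradient f (x i)) :
    ∀ i, 1 ≤ i →
      ‖x i - p (x i)‖ ^ 2 ≤
        ‖gradient f (x 0)‖ ^ 2 / (4 * μ ^ 2) * (1 - μ ^ 2 / L ^ 2) ^ (i - 1) :=
  fun _ hi ↦ stmt_1_general hp hRSI hEB hμ hx1 hx hi
end
end

section
/- Let d ≥ 1, let μ > 0, and let f : ℝ^d → ℝ be a differentiable function in RSI⁻(μ). For any x ∈ ℝ^d, let y = x − (1/(2μ))·∇f(x). Then ‖y − y^*‖² ≤ ‖∇f(x)‖²/(4μ²), where y^* denotes the orthogonal projection of y onto the set of global minimizers of f. -/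
noncomputable section

open RealInnerProductSpace

/-!
The inequality `μ‖x - s‖² ≤ ⟪v, x - s⟫` says that the segment from `x` to `x - v / μ` is seen from
`s` under an angle of at least a right angle. By Thales, this means that `s` lies in the closed
ball with that segment as a diameter, whose centre is the gradient step `x - v / (2μ)` and whose
radius is `‖v‖ / (2μ)`. Applied with `v = ∇f(x)` and `s = x^*`, this exhibits a minimizer within
the required distance of the step.
-/

section InnerProductSpace

variable {E : Type*} [NormedAddCommGroup E] [InnerProductSpace ℝ E]

theorem norm_sub_le_norm_right_iff_sq_le_two_mul_inner (w u : E) :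
    ‖w - u‖ ≤ ‖u‖ ↔ ‖w‖ ^ 2 ≤ 2 * ⟪u, w⟫ := by
  rw [← sq_le_sq₀ (norm_nonneg _) (norm_nonneg _), norm_sub_sq_real, real_inner_comm,
    add_le_iff_nonpos_left, sub_nonpos]

theorem norm_sub_smul_sub_le_div_iff {μ : ℝ} (hμ : 0 < μ) (x v s : E) :
    ‖x - (1 / (2 * μ)) • v - s‖ ≤ ‖v‖ / (2 * μ) ↔ μ * ‖x - s‖ ^ 2 ≤ ⟪v, x - s⟫ := by
  have norm_step : ‖(1 / (2 * μ)) • v‖ = ‖v‖ / (2 * μ) := by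
    rw [norm_smul_of_nonneg (by positivity), one_div_mul_eq_div]
  have two_mul_inner_step : 2 * ⟪(1 / (2 * μ)) • v, x - s⟫ = ⟪v, x - s⟫ / μ := by
    rw [real_inner_smul_left]
    field_simp
  rw [sub_right_comm, ← norm_step, norm_sub_le_norm_right_iff_sq_le_two_mul_inner,
    two_mul_inner_step, le_div_iff₀' hμ]

theorem stmt_3_general {μ : ℝ} (hμ : 0 < μ) {X : Set E} {x v s : E} (hs : s ∈ X)
    (hRSI : μ * ‖x - s‖ ^ 2 ≤ ⟪v, x - s⟫) :
    Metric.infDist (x - (1 / (2 * μ)) • v) X ^ 2 ≤ ‖v‖ ^ 2 / (4 * μ ^ 2) :=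
  calc Metric.infDist (x - (1 / (2 * μ)) • v) X ^ 2
    _ ≤ ‖x - (1 / (2 * μ)) • v - s‖ ^ 2 := by
      gcongr
      exacts [Metric.infDist_nonneg, dist_eq_norm_sub _ s ▸ Metric.infDist_le_dist_of_mem hs]
    _ ≤ (‖v‖ / (2 * μ)) ^ 2 := by
      gcongr
      exact (norm_sub_smul_sub_le_div_iff hμ x v s).mpr hRSI
    _ = ‖v‖ ^ 2 / (4 * μ ^ 2) := by ring

end InnerProductSpace

theorem IsProjOn.norm_sub_eq_infDist {d : ℕ}
    {p : EuclideanSpace ℝ (Fin d) → EuclideanSpace ℝ (Fin d)}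
    {X : Set (EuclideanSpace ℝ (Fin d))} (hp : IsProjOn p X) (y : EuclideanSpace ℝ (Fin d)) :
    ‖y - p y‖ = Metric.infDist y X := by
  obtain ⟨hmem, hmin⟩ := hp y
  rw [← dist_eq_norm_sub]
  refine le_antisymm ((Metric.le_infDist ⟨_, hmem⟩).mpr fun {z} hz => ?_)
    (Metric.infDist_le_dist_of_mem hmem)
  simpa only [dist_eq_norm_sub] using hmin z hz

/-- One step of gradient descent with step size `1/(2μ)` on a function
satisfying `RSI⁻(μ)` lands within distance `‖∇f(x)‖/(2μ)` of the minimizer set. -/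
theorem stmt_3 {d : ℕ} (hd : 1 ≤ d) (μ : ℝ) (hμ : 0 < μ)
    (f : EuclideanSpace ℝ (Fin d) → ℝ) (hf : Differentiable ℝ f)
    (hne : (argminSet f).Nonempty) (hcl : IsClosed (argminSet f))
    (hcv : Convex ℝ (argminSet f))
    (p : EuclideanSpace ℝ (Fin d) → EuclideanSpace ℝ (Fin d))
    (hp : IsProjOn p (argminSet f))
    (hRSI : ∀ x, μ * ‖x - p x‖ ^ 2 ≤ ⟪gradient f x, x - p x⟫)
    (x y : EuclideanSpace ℝ (Fin d))
    (hy : y = x - (1 / (2 * μ)) • gradient f x) :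
    ‖y - p y‖ ^ 2 ≤ ‖gradient f x‖ ^ 2 / (4 * μ ^ 2) := by
  rw [hy, hp.norm_sub_eq_infDist]
  exact stmt_3_general hμ (hp x).1 (hRSI x)
end
end

section
/- Resisting-oracle lemma: let d ≥ 2, μ > 0, L > μ, and α₀ ∈ [μ/L², max(μ/L², 1/(2μ))]. For any first-order algorithm 𝒜 on ℝ^d and any starting point x₀ ∈ ℝ^d, there exist vectors g₀, …, g_{d−2} ∈ ℝ^d with g₀ ≠ 0, reals f₀, …, f_{d−2}, and nested sets S_{d−2} ⊆ S_{d−3} ⊆ … ⊆ S₀ ⊆ ℝ^d such that: (1) for each i ≤ d−2 there is an affine subspace H_i of ℝ^d of dimension d − i − 1 and a point c_i ∈ H_i with S_i = {x ∈ H_i : ‖x − c_i‖ = r_i}, where r_i = √(α₀/μ − α₀²)·‖g₀‖·(1 − μ²/L²)^{i/2}; (2) letting (x_i) be the iterates generated by 𝒜 starting from x₀ reading the values f_j and gradients g_j (i.e. x_{j+1} = 𝒜_j((x_k, f_k, g_k)_{k ≤ j})), for every i ≤ d−2 and every x ∈ S_i there exists a differentiable function f ∈ RSI⁻(μ) ∩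 EB⁺(L) whose set of global minimizers is exactly {x} and which satisfies ∇f(x_j) = g_j and f(x_j) = f_j for all j ≤ i. -/
noncomputable section

open RealInnerProductSpace

/-- A first-order algorithm on `ℝ^d` : for each `n`, a map from the first `n + 1`
triples (iterate, function value, gradient) to the next iterate. -/
def FirstOrderAlgorithm (d : ℕ) : Type :=
  (n : ℕ) →
    (Fin (n + 1) → EuclideanSpace ℝ (Fin d) × ℝ × EuclideanSpace ℝ (Fin d)) →
    EuclideanSpace ℝ (Fin d)

/-!
An answer with gradient `g` at `p` leaves `z` possible as the minimizer as soon as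
`⟪g, p - z⟫ ≥ μ‖p - z‖²` and `‖g‖ ≤ L‖p - z‖`: finitely many such answers are interpolated by the
quadratic `(μ + L) / 4 * ‖x - z‖²`, whose gradient satisfies both conditions with room to spare
away from `z`, corrected near each query by a linear function times a slowly varying cutoff.

If `p - c = α g`, then on the sphere of center `c` and squared radius `(α/μ - α²)‖g‖²` in the
hyperplane orthogonal to `g`, the first condition is an equality and the second one amounts to
`α ≥ μ/L²`. At each query the oracle therefore slices the current sphere, of radius `r`, by a
hyperplane at distance `rμ/L` from its center, on the side away from the query. The radius shrinks
by the factor `√(1 - μ²/L²)`, and the query is at distance at least `rμ/L` from the new center,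
which is exactly what `α ≥ μ/L²` requires.
-/

open Filter Topology

section Cutoff

variable {E : Type*} [NormedAddCommGroup E] [InnerProductSpace ℝ E]

lemma hasFDerivAt_mul_of_eq_zero {F : Type*} [NormedAddCommGroup F] [NormedSpace ℝ F]
    {η h : F → ℝ} {h' : F →L[ℝ] ℝ} {x : F} (hη : ContinuousAt η x) (hh : HasFDerivAt h h' x)
    (hx : h x = 0) : HasFDerivAt (fun y ↦ η y * h y) (η x • h') x := by
  have hη_sub : (fun y ↦ η y - η x) =o[𝓝 x] fun _ ↦ (1 : ℝ) :=
    (Asymptotics.isLittleO_one_iff ℝ).2 (by simpa using hη.sub_const (η x))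
  have hη_bdd : η =O[𝓝 x] fun _ ↦ (1 : ℝ) := hη.isBigO_one ℝ
  have hη_mul_rem : (fun y ↦ η y * (h y - h x - h' (y - x))) =o[𝓝 x] fun y ↦ ‖y - x‖ := by
    simpa using hη_bdd.mul_isLittleO hh.isLittleO.norm_right
  have hη_sub_mul : (fun y ↦ (η y - η x) * h' (y - x)) =o[𝓝 x] fun y ↦ ‖y - x‖ := by
    simpa using hη_sub.mul_isBigO (h'.isBigO_sub (𝓝 x) x).norm_right
  refine .of_isLittleO ((hη_mul_rem.add hη_sub_mul).of_norm_right.congr_left fun y ↦ ?_)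
  simp only [hx, smul_apply, smul_eq_mul]
  ring

/-- A cutoff of `u ≥ 0`, equal to `1` at `0` and to `0` on `[1, ∞)`. A small exponent `δ` makes it
vary so slowly that `|u ψ'(u)|` is at most a small multiple of `1 - ψ(u)`. -/
def slowCutoff (δ u : ℝ) : ℝ := max 0 (1 - u ^ δ) ^ 2

lemma slowCutoff_zero {δ : ℝ} (hδ : δ ≠ 0) : slowCutoff δ 0 = 1 := by
  simp [slowCutoff, Real.zero_rpow hδ]

lemma slowCutoff_eq_zero {δ u : ℝ} (hδ : 0 ≤ δ) (hu : 1 ≤ u) : slowCutoff δ u = 0 := by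
  rw [slowCutoff, max_eq_left (sub_nonpos.2 (Real.one_le_rpow hu hδ)), zero_pow two_ne_zero]

lemma slowCutoff_nonneg (δ u : ℝ) : 0 ≤ slowCutoff δ u := sq_nonneg _

lemma continuous_slowCutoff {δ : ℝ} (hδ : 0 ≤ δ) : Continuous (slowCutoff δ) := by
  have := Real.continuous_rpow_const hδ
  unfold slowCutoff
  fun_prop

lemma le_one_sub_slowCutoff {δ u : ℝ} (hδ0 : 0 ≤ δ) (hδ1 : δ ≤ 1) (hu0 : 0 ≤ u) (hu1 : u ≤ 1) :
    u ≤ 1 - slowCutoff δ u := by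
  have hpow_le : u ^ δ ≤ 1 := Real.rpow_le_one hu0 hu1 hδ0
  have hle_pow : u ≤ u ^ δ := Real.self_le_rpow_of_le_one hu0 hu1 hδ1
  rw [slowCutoff, max_eq_right (sub_nonneg.2 hpow_le)]
  nlinarith

lemma hasDerivAt_max_zero_sq (v : ℝ) : HasDerivAt (fun v ↦ max 0 v ^ 2) (2 * max 0 v) v := by
  have hsq : (fun v : ℝ ↦ max 0 v ^ 2) = fun v ↦ max 0 v * v := by
    ext v
    rcases le_total v 0 with h | h <;> simp [h, sq]
  rcases lt_trichotomy v 0 with hv | rfl | hv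
  · have hzero : (fun v : ℝ ↦ max 0 v ^ 2) =ᶠ[𝓝 v] fun _ ↦ 0 := by
      filter_upwards [Iio_mem_nhds hv] with w hw
      simp [max_eq_left (Set.mem_Iio.1 hw).le]
    simpa [hv.le] using (hasDerivAt_const v (0 : ℝ)).congr_of_eventuallyEq hzero
  · rw [hsq, hasDerivAt_iff_hasFDerivAt]
    have hmax : ContinuousAt (fun v : ℝ ↦ max 0 v) 0 := by fun_prop
    simpa using hasFDerivAt_mul_of_eq_zero hmax (hasFDerivAt_id (0 : ℝ)) rfl
  · have hpow : (fun v : ℝ ↦ max 0 v ^ 2) =ᶠ[𝓝 v] fun v ↦ v ^ 2 := by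
      filter_upwards [Ioi_mem_nhds hv] with w hw
      rw [max_eq_right (Set.mem_Ioi.1 hw).le]
    simpa [hv.le] using (hasDerivAt_pow 2 v).congr_of_eventuallyEq hpow

lemma hasDerivAt_slowCutoff (δ : ℝ) {u : ℝ} (hu : 0 < u) :
    HasDerivAt (slowCutoff δ) (2 * max 0 (1 - u ^ δ) * -(δ * u ^ (δ - 1))) u :=
  (hasDerivAt_max_zero_sq _).comp u ((Real.hasDerivAt_rpow_const (.inl hu.ne')).const_sub 1)

lemma abs_mul_deriv_slowCutoff_le {δ u : ℝ} (hδ : 0 ≤ δ) (hu : 0 < u) :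
    |u * deriv (slowCutoff δ) u| ≤ 2 * δ * (1 - slowCutoff δ u) := by
  have hs : 0 ≤ u ^ δ := Real.rpow_nonneg hu.le δ
  have hmul : u * deriv (slowCutoff δ) u = -(2 * δ * (max 0 (1 - u ^ δ) * u ^ δ)) := by
    rw [(hasDerivAt_slowCutoff δ hu).deriv, Real.rpow_sub_one hu.ne']
    field_simp
  rw [hmul, abs_neg, abs_of_nonneg (by positivity), slowCutoff]
  gcongr
  rcases le_total (1 - u ^ δ) 0 with h | h
  · simp [h]
  · rw [max_eq_right h]
    nlinarith

lemma exists_hasFDerivAt_norm_sub {p x : E} (hx : x ≠ p) :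
    ∃ N : E →L[ℝ] ℝ, HasFDerivAt (fun y ↦ ‖y - p‖) N x ∧ ‖N‖ ≤ 1 := by
  have hdiff : DifferentiableAt ℝ (fun y ↦ ‖y - p‖) x :=
    (differentiableAt_id.sub_const p).norm ℝ (sub_ne_zero.2 hx)
  refine ⟨_, hdiff.hasFDerivAt, ?_⟩
  have hlip : LipschitzWith 1 fun y ↦ ‖y - p‖ := by
    simpa [← dist_eq_norm] using LipschitzWith.dist_left p
  simpa using norm_fderiv_le_of_lipschitz ℝ hlip

lemma exists_hasFDerivAt_slowCutoff_mul {h : E → ℝ} {h' : E →L[ℝ] ℝ} {p x : E} {C R δ : ℝ}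
    (hδ : 0 < δ) (hR : 0 < R) (hh : HasFDerivAt h h' x) (hx : |h x| ≤ C * ‖x - p‖) :
    ∃ D : E →L[ℝ] ℝ, HasFDerivAt (fun y ↦ slowCutoff δ (‖y - p‖ / R) * h y) D x ∧
      ‖D - slowCutoff δ (‖x - p‖ / R) • h'‖ ≤
        2 * δ * (1 - slowCutoff δ (‖x - p‖ / R)) * C := by
  rcases eq_or_ne x p with rfl | hxp
  · have hcont : ContinuousAt (fun y ↦ slowCutoff δ (‖y - x‖ / R)) x :=
      ((continuous_slowCutoff hδ.le).comp (by fun_prop)).continuousAt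
    have h0 : h x = 0 := by simpa using hx
    exact ⟨_, hasFDerivAt_mul_of_eq_zero hcont hh h0, by simp [slowCutoff_zero hδ.ne']⟩
  obtain ⟨N, hN, hN1⟩ := exists_hasFDerivAt_norm_sub hxp
  have hpos : 0 < ‖x - p‖ := norm_pos_iff.2 (sub_ne_zero.2 hxp)
  have hC : 0 ≤ C := nonneg_of_mul_nonneg_left ((abs_nonneg _).trans hx) hpos
  have hu : 0 < ‖x - p‖ / R := by positivity
  set u := ‖x - p‖ / R with hu_def
  set ψ' := deriv (slowCutoff δ) u
  have hcutoff : HasFDerivAt (fun y ↦ slowCutoff δ (‖y - p‖ / R)) (ψ' • R⁻¹ • N) x := by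
    have hdiv : HasFDerivAt (fun y ↦ ‖y - p‖ / R) (R⁻¹ • N) x := by
      simpa only [div_eq_mul_inv] using hN.mul_const R⁻¹
    exact (hasDerivAt_slowCutoff δ hu).differentiableAt.hasDerivAt.comp_hasFDerivAt x hdiv
  refine ⟨_, hcutoff.mul hh, ?_⟩
  calc ‖slowCutoff δ u • h' + h x • ψ' • R⁻¹ • N - slowCutoff δ u • h'‖
      = |h x| * (|ψ'| * (R⁻¹ * ‖N‖)) := by
        rw [add_sub_cancel_left, norm_smul, norm_smul, norm_smul, norm_inv, Real.norm_eq_abs,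
          Real.norm_eq_abs, Real.norm_of_nonneg hR.le]
    _ ≤ C * ‖x - p‖ * (|ψ'| * (R⁻¹ * 1)) := by gcongr
    _ = |u * ψ'| * C := by rw [abs_mul, abs_of_pos hu, hu_def]; ring
    _ ≤ 2 * δ * (1 - slowCutoff δ u) * C := by
        gcongr
        exact abs_mul_deriv_slowCutoff_le hδ.le hu

end Cutoff

section LocalPerturbation

variable {E : Type*} [NormedAddCommGroup E] [InnerProductSpace ℝ E]

/-- A sum of linear functions `⟪w p, · - p⟫`, each localized to the ball of radius `R` around its
base point `p`. Adding it to a function changes the gradient at `p` by `w p`. -/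
def localPerturbation (δ R : ℝ) (P : Finset E) (w : E → E) (x : E) : ℝ :=
  ∑ p ∈ P, slowCutoff δ (‖x - p‖ / R) * ⟪w p, x - p⟫

variable {δ R : ℝ} {P : Finset E} {p x : E}

lemma slowCutoff_mul_inner_eventuallyEq_zero (hδ : 0 ≤ δ) (hR : 0 < R) (w : E)
    (hx : R < ‖x - p‖) :
    (fun y ↦ slowCutoff δ (‖y - p‖ / R) * ⟪w, y - p⟫) =ᶠ[𝓝 x] 0 := by
  have hfar : ∀ᶠ y in 𝓝 x, R < ‖y - p‖ := by
    have hcont : ContinuousAt (fun y ↦ ‖y - p‖) x := by fun_prop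
    exact hcont.eventually_const_lt hx
  filter_upwards [hfar] with y hy
  simp [slowCutoff_eq_zero hδ ((one_le_div₀ hR).2 hy.le)]

lemma localPerturbation_eventuallyEq_zero (hδ : 0 ≤ δ) (hR : 0 < R) (w : E → E)
    (hx : ∀ p ∈ P, R < ‖x - p‖) : localPerturbation δ R P w =ᶠ[𝓝 x] 0 := by
  filter_upwards [(eventually_all_finset P).2 fun p hp ↦
    slowCutoff_mul_inner_eventuallyEq_zero hδ hR (w p) (hx p hp)] with y hy
  exact Finset.sum_eq_zero hy

lemma localPerturbation_eventuallyEq_single (hδ : 0 ≤ δ) (hR : 0 < R) (w : E → E)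
    (hsep : ∀ q ∈ P, q ≠ p → 2 * R < ‖p - q‖) (hp : p ∈ P) (hx : ‖x - p‖ ≤ R) :
    localPerturbation δ R P w =ᶠ[𝓝 x]
      fun y ↦ slowCutoff δ (‖y - p‖ / R) * ⟪w p, y - p⟫ := by
  classical
  have hfar : ∀ q ∈ P.erase p, R < ‖x - q‖ := by
    intro q hq
    have hpq := hsep q (Finset.mem_of_mem_erase hq) (Finset.ne_of_mem_erase hq)
    have htri := norm_sub_le_norm_sub_add_norm_sub p x q
    rw [norm_sub_rev p x] at htri
    linarith
  filter_upwards [localPerturbation_eventuallyEq_zero hδ hR w hfar] with y hy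
  rw [localPerturbation, ← Finset.add_sum_erase P _ hp]
  exact add_eq_left.2 hy

lemma localPerturbation_apply_self (hδ : 0 ≤ δ) (hR : 0 < R) (w : E → E)
    (hsep : ∀ q ∈ P, q ≠ p → 2 * R < ‖p - q‖) (hp : p ∈ P) :
    localPerturbation δ R P w p = 0 := by
  have h := localPerturbation_eventuallyEq_single hδ hR w hsep hp (x := p) (by simpa using hR.le)
  simpa using h.eq_of_nhds

lemma exists_hasGradientAt_localPerturbation [CompleteSpace E] (hδ : 0 < δ) (hR : 0 < R)
    (w : E → E) (hsep : ∀ q ∈ P, q ≠ p → 2 * R < ‖p - q‖) (hp : p ∈ P) (hx : ‖x - p‖ ≤ R) :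
    ∃ v, HasGradientAt (localPerturbation δ R P w) v x ∧
      ‖v - slowCutoff δ (‖x - p‖ / R) • w p‖ ≤
        2 * δ * (1 - slowCutoff δ (‖x - p‖ / R)) * ‖w p‖ := by
  have hlin : HasFDerivAt (fun y ↦ ⟪w p, y - p⟫) (innerSL ℝ (w p)) x := by
    simp only [inner_sub_right]
    exact (innerSL ℝ (w p)).hasFDerivAt.sub_const ⟪w p, p⟫
  obtain ⟨D, hD, hD_le⟩ := exists_hasFDerivAt_slowCutoff_mul hδ hR hlin
    (abs_real_inner_le_norm (w p) (x - p))
  have hgrad := (hD.congr_of_eventuallyEq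
    (localPerturbation_eventuallyEq_single hδ.le hR w hsep hp hx)).hasGradientAt
  refine ⟨_, hgrad, ?_⟩
  rw [← (InnerProductSpace.toDual ℝ E).norm_map, map_sub, map_smul,
    LinearIsometryEquiv.apply_symm_apply]
  exact hD_le

lemma hasGradientAt_localPerturbation_self [CompleteSpace E] (hδ : 0 < δ) (hR : 0 < R)
    (w : E → E) (hsep : ∀ q ∈ P, q ≠ p → 2 * R < ‖p - q‖) (hp : p ∈ P) :
    HasGradientAt (localPerturbation δ R P w) (w p) p := by
  obtain ⟨v, hv, hv_le⟩ := exists_hasGradientAt_localPerturbation hδ hR w hsep hp (x := p)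
    (by simpa using hR.le)
  have hv_eq : v = w p := by
    simpa [slowCutoff_zero hδ.ne', sub_eq_zero] using hv_le
  exact hv_eq ▸ hv

end LocalPerturbation

section AdmissibleGradients

variable {E : Type*} [NormedAddCommGroup E] [InnerProductSpace ℝ E]

/-- The gradients allowed by `RSI⁻(μ)` and `EB⁺(L)` at a point displaced by `z` from the unique
minimizer, with both inequalities relaxed by a slack `τ`. A negative slack means that they hold with
room to spare, so that a perturbation can be absorbed. -/
def admissibleGradients (μ L τ : ℝ) (z : E) : Set E :=
  {v | μ * ‖z‖ ^ 2 - τ * ‖z‖ ≤ ⟪v, z⟫ ∧ ‖v‖ ≤ L * ‖z‖ + τ}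

variable {μ L τ σ η : ℝ} {z z₀ v w g e : E}

lemma admissibleGradients_mono (h : τ ≤ σ) :
    admissibleGradients μ L τ z ⊆ admissibleGradients μ L σ z := by
  rintro v ⟨hrsi, heb⟩
  exact ⟨le_trans (by gcongr) hrsi, heb.trans (by gcongr)⟩

lemma mean_smul_mem_admissibleGradients (h : 0 ≤ μ + L) (z : E) :
    ((μ + L) / 2) • z ∈ admissibleGradients μ L (-((L - μ) / 2 * ‖z‖)) z := by
  refine ⟨le_of_eq ?_, le_of_eq ?_⟩
  · rw [real_inner_smul_left, real_inner_self_eq_norm_sq]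
    ring
  · rw [norm_smul, Real.norm_of_nonneg (by linarith)]
    ring

lemma add_mem_admissibleGradients (hv : v ∈ admissibleGradients μ L τ z) (e : E) :
    v + e ∈ admissibleGradients μ L (τ + ‖e‖) z := by
  obtain ⟨hrsi, heb⟩ := hv
  have hinner := neg_le_of_abs_le (abs_real_inner_le_norm e z)
  refine ⟨?_, ?_⟩
  · rw [inner_add_left]
    linarith
  · linarith [norm_add_le v e]

lemma combo_mem_admissibleGradients (hv : v ∈ admissibleGradients μ L τ z)
    (hw : w ∈ admissibleGradients μ L σ z) (hη0 : 0 ≤ η) (hη1 : η ≤ 1) :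
    (1 - η) • v + η • w ∈ admissibleGradients μ L ((1 - η) * τ + η * σ) z := by
  have hη : 0 ≤ 1 - η := sub_nonneg.2 hη1
  refine ⟨?_, ?_⟩
  · rw [inner_add_left, real_inner_smul_left, real_inner_smul_left]
    linarith [mul_le_mul_of_nonneg_left hv.1 hη, mul_le_mul_of_nonneg_left hw.1 hη0]
  · calc ‖(1 - η) • v + η • w‖ ≤ (1 - η) * ‖v‖ + η * ‖w‖ := by
          simpa only [norm_smul, Real.norm_of_nonneg hη, Real.norm_of_nonneg hη0] using
            norm_add_le ((1 - η) • v) (η • w)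
      _ ≤ (1 - η) * (L * ‖z‖ + τ) + η * (L * ‖z‖ + σ) := by
          gcongr
          exacts [hv.2, hw.2]
      _ = L * ‖z‖ + ((1 - η) * τ + η * σ) := by ring

lemma mem_admissibleGradients_of_near (hμ : 0 ≤ μ) (hL : μ ≤ L)
    (hg : g ∈ admissibleGradients μ L 0 z₀) (hz : ‖z - z₀‖ ≤ ‖z‖) :
    g ∈ admissibleGradients μ L (4 * L * ‖z - z₀‖) z := by
  obtain ⟨hrsi, heb⟩ := hg
  set y := z - z₀ with hy
  have hL0 : 0 ≤ L := hμ.trans hL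
  have hz₀ : ‖z₀‖ ≤ ‖z‖ + ‖y‖ := by
    simpa [hy] using norm_sub_le z y
  have hg_le : ‖g‖ ≤ L * (‖z‖ + ‖y‖) := by
    rw [add_zero] at heb
    exact heb.trans (by gcongr)
  refine ⟨?_, by nlinarith [mul_nonneg hL0 (norm_nonneg y)]⟩
  have hsq : ‖z‖ ^ 2 - 2 * ‖z‖ * ‖y‖ ≤ ‖z₀‖ ^ 2 := by
    have habs : |‖z‖ - ‖y‖| ≤ ‖z₀‖ := by
      simpa [hy] using abs_norm_sub_norm_le z y
    nlinarith [sq_le_sq.2 (habs.trans (le_abs_self _)), sq_nonneg ‖y‖]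
  have hgy : -(L * (‖z‖ + ‖z‖) * ‖y‖) ≤ ⟪g, y⟫ := by
    refine le_trans (neg_le_neg ?_) (neg_le_of_abs_le (abs_real_inner_le_norm g y))
    gcongr
    exact hg_le.trans (by gcongr)
  have hsplit : ⟪g, z⟫ = ⟪g, z₀⟫ + ⟪g, y⟫ := by
    rw [← inner_add_right, hy, add_sub_cancel]
  calc μ * ‖z‖ ^ 2 - 4 * L * ‖y‖ * ‖z‖
      ≤ μ * ‖z‖ ^ 2 - 2 * μ * ‖y‖ * ‖z‖ - 2 * L * ‖y‖ * ‖z‖ := by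
        nlinarith [mul_le_mul_of_nonneg_right hL (mul_nonneg (norm_nonneg y) (norm_nonneg z))]
    _ ≤ μ * ‖z₀‖ ^ 2 + -(L * (‖z‖ + ‖z‖) * ‖y‖) := by
        linarith [mul_le_mul_of_nonneg_left hsq hμ]
    _ ≤ ⟪g, z⟫ := by linarith

lemma norm_sub_mean_smul_le (hμ : 0 ≤ μ) (hL : μ ≤ L) (hg : g ∈ admissibleGradients μ L 0 z) :
    ‖g - ((μ + L) / 2) • z‖ ≤ 2 * L * ‖z‖ := by
  have hmean : ‖((μ + L) / 2) • z‖ ≤ L * ‖z‖ := by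
    rw [norm_smul, Real.norm_of_nonneg (by linarith)]
    gcongr
    linarith
  linarith [norm_sub_le g (((μ + L) / 2) • z), hg.2]

-- The slack `-(L - μ) / 2 * ‖z‖` of the mean field, weighted by `1 - η`, pays for moving `g` from
-- `z₀` to `z` and for the error `e`; both costs must therefore vanish with `1 - η`.
lemma mean_smul_add_perturbation_mem_admissibleGradients (hμ : 0 < μ) (hL : μ < L)
    (hg : g ∈ admissibleGradients μ L 0 z₀) (hη0 : 0 ≤ η) (hη1 : η ≤ 1)
    (hz : 40 * L * ‖z - z₀‖ ≤ (L - μ) * ‖z₀‖ * (1 - η))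
    (he : 8 * ‖e‖ ≤ (L - μ) * ‖z₀‖ * (1 - η)) :
    ((μ + L) / 2) • z + (η • (g - ((μ + L) / 2) • z₀) + e) ∈ admissibleGradients μ L 0 z := by
  have hL0 : 0 < L := hμ.trans hL
  set m := (μ + L) / 2 with hm
  set y := z - z₀ with hy
  have hmove_small : 40 * ‖y‖ ≤ ‖z₀‖ := by
    have : (L - μ) * ‖z₀‖ * (1 - η) ≤ L * ‖z₀‖ * 1 := by gcongr <;> linarith
    nlinarith
  have hz₀ : ‖z₀‖ ≤ ‖z‖ + ‖y‖ := by
    simpa [hy] using norm_sub_le z y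
  have hmean := mean_smul_mem_admissibleGradients (by linarith : 0 ≤ μ + L) z
  have hmoved := mem_admissibleGradients_of_near hμ.le hL.le hg
    (by linarith [norm_nonneg y] : ‖z - z₀‖ ≤ ‖z‖)
  have hmem := add_mem_admissibleGradients (combo_mem_admissibleGradients hmean hmoved hη0 hη1)
    ((η * m) • y + e)
  have hdecomp : m • z + (η • (g - m • z₀) + e) =
      (1 - η) • m • z + η • g + ((η * m) • y + e) := by
    rw [hy]
    module
  rw [hdecomp]
  refine admissibleGradients_mono ?_ hmem
  have herr : ‖(η * m) • y + e‖ ≤ L * ‖y‖ + ‖e‖ := by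
    refine (norm_add_le _ _).trans ?_
    rw [norm_smul, Real.norm_of_nonneg (by positivity)]
    have : η * m ≤ 1 * L := by gcongr; linarith
    gcongr
    linarith
  have hmove : η * (4 * L * ‖y‖) ≤ 1 * (4 * L * ‖y‖) := by gcongr
  have hpay : (1 - η) * ((L - μ) * ‖z₀‖) ≤ (1 - η) * ((L - μ) * (2 * ‖z‖)) := by
    gcongr
    linarith [norm_nonneg z₀]
  linarith

end AdmissibleGradients

section Interpolation

lemma lt_of_forall_inner_gradient_pos {E : Type*} [NormedAddCommGroup E] [InnerProductSpace ℝ E]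
    [CompleteSpace E] {f : E → ℝ} {z x : E} (hf : Differentiable ℝ f)
    (h : ∀ y, y ≠ z → 0 < ⟪gradient f y, y - z⟫) (hx : x ≠ z) : f z < f x := by
  have hline : ∀ t : ℝ, HasDerivAt (fun t : ℝ ↦ f (z + t • (x - z)))
      ⟪gradient f (z + t • (x - z)), x - z⟫ t := by
    intro t
    have hpath : HasDerivAt (fun t : ℝ ↦ z + t • (x - z)) (x - z) t := by
      simpa using ((hasDerivAt_id t).smul_const (x - z)).const_add z
    exact (hf _).hasGradientAt.hasFDerivAt.comp_hasDerivAt t hpath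
  obtain ⟨t, ⟨ht, -⟩, hslope⟩ := exists_hasDerivAt_eq_slope _ _ one_pos
    (fun t _ ↦ (hline t).continuousAt.continuousWithinAt) fun t _ ↦ hline t
  have hpos := h (z + t • (x - z)) (by simp [ht.ne', sub_ne_zero.2 hx])
  rw [add_sub_cancel_left, real_inner_smul_right, hslope] at hpos
  simpa using pos_of_mul_pos_right hpos ht.le

lemma exists_radius_lt_and_separated {E : Type*} [NormedAddCommGroup E] (P : Finset E) {b : E → ℝ}
    (hb : ∀ p ∈ P, 0 < b p) :
    ∃ R > 0, (∀ p ∈ P, R < b p) ∧ ∀ p ∈ P, ∀ q ∈ P, q ≠ p → 2 * R < ‖p - q‖ := by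
  have hlt : ∀ᶠ R : ℝ in 𝓝 0, ∀ p ∈ P, R < b p :=
    (eventually_all_finset P).2 fun p hp ↦ eventually_lt_nhds (hb p hp)
  have hsep : ∀ᶠ R : ℝ in 𝓝 0, ∀ p ∈ P, ∀ q ∈ P, q ≠ p → 2 * R < ‖p - q‖ := by
    refine (eventually_all_finset P).2 fun p _ ↦ (eventually_all_finset P).2 fun q _ ↦ ?_
    refine eventually_imp_distrib_left.2 fun hqp ↦ ?_
    have hcont : ContinuousAt (fun R : ℝ ↦ 2 * R) 0 := by fun_prop
    exact hcont.eventually_lt_const (by simpa [sub_eq_zero] using hqp.symm)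
  obtain ⟨R, ⟨hRb, hRsep⟩, hR⟩ := ((hlt.and hsep).filter_mono nhdsWithin_le_nhds |>.and
    (self_mem_nhdsWithin : Set.Ioi (0 : ℝ) ∈ 𝓝[>] 0)).exists
  exact ⟨R, hR, hRb, hRsep⟩

section Hilbert

variable {E : Type*} [NormedAddCommGroup E] [InnerProductSpace ℝ E] [CompleteSpace E]

lemma hasGradientAt_norm_sub_sq (m : ℝ) (z x : E) :
    HasGradientAt (fun y ↦ m / 2 * ‖y - z‖ ^ 2) (m • (x - z)) x := by
  have h := (((hasFDerivAt_id x).sub_const z).norm_sq).const_mul (m / 2)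
  rw [hasGradientAt_iff_hasFDerivAt]
  refine h.congr_fderiv ?_
  ext v
  simp only [id_eq, map_sub, ContinuousLinearMap.comp_id, smul_apply, sub_apply, coe_innerSL_apply,
    nsmul_eq_mul, Nat.cast_ofNat, smul_eq_mul, map_smul, InnerProductSpace.toDual_apply_apply]
  ring

variable {μ L : ℝ} {P : Finset E} {g : E → E} {z : E}

/-- A function whose gradient at each `p ∈ P` is `g p`. It is the quadratic with minimizer `z` and
curvature halfway between `μ` and `L`, plus the localized corrections; the cutoff exponent is small
enough for the conditions `RSI⁻(μ)` and `EB⁺(L)` to survive the corrections when `R` is small. -/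
def interpolant (μ L R : ℝ) (P : Finset E) (g : E → E) (z x : E) : ℝ :=
  (μ + L) / 2 / 2 * ‖x - z‖ ^ 2 +
    localPerturbation ((L - μ) / (32 * L)) R P (fun p ↦ g p - ((μ + L) / 2) • (p - z)) x

lemma hasGradientAt_quadratic_add {φ : E → ℝ} {v x : E} (h : HasGradientAt φ v x) (m : ℝ) (z : E) :
    HasGradientAt (fun y ↦ m / 2 * ‖y - z‖ ^ 2 + φ y) (m • (x - z) + v) x := by
  rw [hasGradientAt_iff_hasFDerivAt, map_add]
  exact (hasGradientAt_norm_sub_sq m z x).hasFDerivAt.add h.hasFDerivAt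

variable {R : ℝ} {p x : E}

lemma exists_hasGradientAt_interpolant_of_far (hμ : 0 < μ) (hL : μ < L) (hR : 0 < R)
    (hx : ∀ p ∈ P, R < ‖x - p‖) :
    ∃ v ∈ admissibleGradients μ L 0 (x - z), HasGradientAt (interpolant μ L R P g z) v x := by
  have hδ : 0 ≤ (L - μ) / (32 * L) := div_nonneg (by linarith) (by linarith)
  have hzero : HasGradientAt (localPerturbation ((L - μ) / (32 * L)) R P
      fun p ↦ g p - ((μ + L) / 2) • (p - z)) 0 x :=
    (hasGradientAt_const x (0 : ℝ)).congr_of_eventuallyEq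
      (localPerturbation_eventuallyEq_zero hδ hR _ hx)
  refine ⟨_, ?_, hasGradientAt_quadratic_add hzero _ z⟩
  rw [add_zero]
  refine admissibleGradients_mono ?_ (mean_smul_mem_admissibleGradients (by linarith) (x - z))
  exact neg_nonpos.2 (mul_nonneg (by linarith) (norm_nonneg _))

lemma exists_hasGradientAt_interpolant_of_near (hμ : 0 < μ) (hL : μ < L) (hR : 0 < R)
    (hsep : ∀ q ∈ P, q ≠ p → 2 * R < ‖p - q‖) (hp : p ∈ P)
    (hR_small : 40 * L * R ≤ (L - μ) * ‖p - z‖)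
    (hg : g p ∈ admissibleGradients μ L 0 (p - z)) (hx : ‖x - p‖ ≤ R) :
    ∃ v ∈ admissibleGradients μ L 0 (x - z), HasGradientAt (interpolant μ L R P g z) v x := by
  have hL0 : 0 < L := hμ.trans hL
  have hδ : 0 < (L - μ) / (32 * L) := div_pos (by linarith) (by linarith)
  have hδ1 : (L - μ) / (32 * L) ≤ 1 := by
    rw [div_le_one₀ (by positivity)]
    linarith
  obtain ⟨v, hv, hv_le⟩ := exists_hasGradientAt_localPerturbation hδ hR
    (fun p ↦ g p - ((μ + L) / 2) • (p - z)) hsep hp hx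
  refine ⟨_, ?_, hasGradientAt_quadratic_add hv _ z⟩
  set η := slowCutoff ((L - μ) / (32 * L)) (‖x - p‖ / R)
  have hη : ‖x - p‖ / R ≤ 1 - η :=
    le_one_sub_slowCutoff hδ.le hδ1 (by positivity) ((div_le_one₀ hR).2 hx)
  have hη_nonneg : 0 ≤ 1 - η := le_trans (by positivity) hη
  have hmove : 40 * L * ‖x - z - (p - z)‖ ≤ (L - μ) * ‖p - z‖ * (1 - η) := by
    rw [sub_sub_sub_cancel_right]
    calc 40 * L * ‖x - p‖ ≤ 40 * L * ((1 - η) * R) := by gcongr; exact (div_le_iff₀ hR).1 hη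
      _ = 40 * L * R * (1 - η) := by ring
      _ ≤ (L - μ) * ‖p - z‖ * (1 - η) := by gcongr
  have herr : 8 * ‖v - η • (g p - ((μ + L) / 2) • (p - z))‖ ≤
      (L - μ) * ‖p - z‖ * (1 - η) := by
    calc 8 * ‖v - η • (g p - ((μ + L) / 2) • (p - z))‖
        ≤ 8 * (2 * ((L - μ) / (32 * L)) * (1 - η) * (2 * L * ‖p - z‖)) := by
          refine mul_le_mul_of_nonneg_left (hv_le.trans ?_) (by norm_num)
          gcongr
          exact norm_sub_mean_smul_le hμ.le hL.le hg
      _ = (L - μ) * ‖p - z‖ * (1 - η) := by field_simp; ring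
  have hmem := mean_smul_add_perturbation_mem_admissibleGradients hμ hL hg
    (slowCutoff_nonneg _ _) (sub_nonneg.1 hη_nonneg) hmove herr
  rwa [add_sub_cancel] at hmem

lemma hasGradientAt_interpolant_self (hμ : 0 < μ) (hL : μ < L) (hR : 0 < R)
    (hsep : ∀ q ∈ P, q ≠ p → 2 * R < ‖p - q‖) (hp : p ∈ P) :
    HasGradientAt (interpolant μ L R P g z) (g p) p := by
  have hδ : 0 < (L - μ) / (32 * L) := div_pos (by linarith) (by linarith)
  have h := hasGradientAt_quadratic_add (hasGradientAt_localPerturbation_self hδ hR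
    (fun p ↦ g p - ((μ + L) / 2) • (p - z)) hsep hp) ((μ + L) / 2) z
  rwa [add_sub_cancel] at h

lemma exists_forall_hasGradientAt_mem_admissibleGradients (hμ : 0 < μ) (hL : μ < L)
    (hP : ∀ p ∈ P, p ≠ z) (hg : ∀ p ∈ P, g p ∈ admissibleGradients μ L 0 (p - z)) :
    ∃ f : E → ℝ, (∀ x, ∃ v ∈ admissibleGradients μ L 0 (x - z), HasGradientAt f v x) ∧
      ∀ p ∈ P, HasGradientAt f (g p) p ∧ f p = (μ + L) / 4 * ‖p - z‖ ^ 2 := by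
  have hL0 : 0 < L := hμ.trans hL
  have hδ : 0 < (L - μ) / (32 * L) := div_pos (by linarith) (by linarith)
  have hbound : ∀ p ∈ P, 0 < (L - μ) * ‖p - z‖ / (40 * L) := fun p hp ↦
    div_pos (mul_pos (by linarith) (norm_pos_iff.2 (sub_ne_zero.2 (hP p hp)))) (by linarith)
  obtain ⟨R, hR, hR_small, hsep⟩ := exists_radius_lt_and_separated P hbound
  refine ⟨interpolant μ L R P g z, fun x ↦ ?_, fun p hp ↦
    ⟨hasGradientAt_interpolant_self hμ hL hR (hsep p hp) hp, ?_⟩⟩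
  · by_cases hfar : ∀ p ∈ P, R < ‖x - p‖
    · exact exists_hasGradientAt_interpolant_of_far hμ hL hR hfar
    · push Not at hfar
      obtain ⟨p, hp, hx⟩ := hfar
      refine exists_hasGradientAt_interpolant_of_near hμ hL hR (hsep p hp) hp ?_ (hg p hp) hx
      rw [mul_comm]
      exact (le_div_iff₀ (by positivity)).1 (hR_small p hp).le
  · rw [interpolant, localPerturbation_apply_self hδ.le hR _ (hsep p hp) hp]
    ring

end Hilbert

variable {d : ℕ} {μ L : ℝ} {P : Finset (EuclideanSpace ℝ (Fin d))}
  {z : EuclideanSpace ℝ (Fin d)}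

lemma memRSIEB_and_argminSet_eq {f : EuclideanSpace ℝ (Fin d) → ℝ} (hμ : 0 < μ)
    (hf : Differentiable ℝ f)
    (hgrad : ∀ x, gradient f x ∈ admissibleGradients μ L 0 (x - z)) :
    MemRSIEB μ L f ∧ argminSet f = {z} := by
  have hrsi : ∀ x, μ * ‖x - z‖ ^ 2 ≤ ⟪gradient f x, x - z⟫ := fun x ↦ by
    simpa using (hgrad x).1
  have heb : ∀ x, ‖gradient f x‖ ≤ L * ‖x - z‖ := fun x ↦ by
    simpa using (hgrad x).2
  have hlt : ∀ x, x ≠ z → f z < f x := fun x hx ↦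
    lt_of_forall_inner_gradient_pos hf (fun y hy ↦ lt_of_lt_of_le
      (mul_pos hμ (pow_pos (norm_pos_iff.2 (sub_ne_zero.2 hy)) 2)) (hrsi y)) hx
  have hargmin : argminSet f = {z} := by
    ext x
    refine ⟨fun hx ↦ not_not.1 fun hne ↦ (hlt x hne).not_ge (hx z), ?_⟩
    rintro rfl y
    rcases eq_or_ne y x with rfl | hne
    exacts [le_rfl, (hlt y hne).le]
  refine ⟨⟨hf, ?_⟩, hargmin⟩
  rw [hargmin]
  exact ⟨Set.singleton_nonempty z, isClosed_singleton, convex_singleton z, fun _ ↦ z,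
    fun x ↦ ⟨rfl, fun y hy ↦ by rw [Set.mem_singleton_iff.1 hy]⟩, hrsi, heb⟩

/-- The answer `(value, gradient)` to a query at `p` is compatible with the minimizer `z`. Fixing
the value to be that of the quadratic of curvature `(μ + L) / 2` makes any finite set of such
answers compatible. -/
structure IsAdmissibleAnswer {E : Type*} [NormedAddCommGroup E] [InnerProductSpace ℝ E]
    (μ L : ℝ) (z p : E) (a : ℝ × E) : Prop where
  ne : p ≠ z
  value_eq : a.1 = (μ + L) / 4 * ‖p - z‖ ^ 2
  gradient_mem : a.2 ∈ admissibleGradients μ L 0 (p - z)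

theorem exists_memRSIEB_of_isAdmissibleAnswer
    {O : EuclideanSpace ℝ (Fin d) → ℝ × EuclideanSpace ℝ (Fin d)} (hμ : 0 < μ) (hL : μ < L)
    (hO : ∀ p ∈ P, IsAdmissibleAnswer μ L z p (O p)) :
    ∃ f, MemRSIEB μ L f ∧ argminSet f = {z} ∧
      ∀ p ∈ P, gradient f p = (O p).2 ∧ f p = (O p).1 := by
  obtain ⟨f, hf, hinterp⟩ := exists_forall_hasGradientAt_mem_admissibleGradients hμ hL
    (fun p hp ↦ (hO p hp).ne) (fun p hp ↦ (hO p hp).gradient_mem)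
  have hdiff : Differentiable ℝ f := fun x ↦
    let ⟨_, _, hv⟩ := hf x
    hv.differentiableAt
  have hgrad : ∀ x, gradient f x ∈ admissibleGradients μ L 0 (x - z) := fun x ↦
    let ⟨_, hv_mem, hv⟩ := hf x
    hv.gradient ▸ hv_mem
  obtain ⟨hmem, hargmin⟩ := memRSIEB_and_argminSet_eq hμ hdiff hgrad
  exact ⟨f, hmem, hargmin, fun p hp ↦
    ⟨(hinterp p hp).1.gradient, (hinterp p hp).2.trans (hO p hp).value_eq.symm⟩⟩

end Interpolation

section Spheres

variable {E : Type*} [NormedAddCommGroup E] [InnerProductSpace ℝ E]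

-- The value is the same for all `z` on the sphere because `p - c ⊥ z - c`.
lemma isAdmissibleAnswer_of_inner_eq_zero {μ L α : ℝ} {z p c g : E} (hμ : 0 < μ) (hL : 0 < L)
    (hα : μ / L ^ 2 ≤ α) (hg : g ≠ 0) (hpc : p - c = α • g) (hinner : ⟪g, z - c⟫ = 0)
    (hz : ‖z - c‖ ^ 2 = (α / μ - α ^ 2) * ‖g‖ ^ 2) :
    IsAdmissibleAnswer μ L z p ((μ + L) / 4 * (α / μ * ‖g‖ ^ 2), g) := by
  have hα0 : 0 < α := lt_of_lt_of_le (by positivity) hα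
  have hpz : p - z = α • g - (z - c) := by
    rw [← hpc, sub_sub_sub_cancel_right]
  have hinner_pz : ⟪g, p - z⟫ = α * ‖g‖ ^ 2 := by
    rw [hpz, inner_sub_right, hinner, real_inner_smul_right, real_inner_self_eq_norm_sq, sub_zero]
  have hnorm_pz : ‖p - z‖ ^ 2 = α / μ * ‖g‖ ^ 2 := by
    rw [hpz, norm_sub_sq_real, real_inner_smul_left, hinner, norm_smul, Real.norm_of_nonneg hα0.le,
      hz]
    ring
  refine ⟨fun h ↦ ?_, by rw [hnorm_pz], ?_, ?_⟩
  · have : 0 < α * ‖g‖ ^ 2 := by positivity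
    simp [← hinner_pz, h] at this
  · rw [hinner_pz, hnorm_pz]
    refine le_of_eq ?_
    field_simp
    ring
  · rw [add_zero]
    refine le_of_sq_le_sq ?_ (by positivity)
    have hμα : 1 ≤ L ^ 2 * (α / μ) := by
      rw [mul_div_assoc', one_le_div₀ hμ]
      exact (div_le_iff₀' (by positivity)).1 hα
    rw [mul_pow, hnorm_pz]
    nlinarith [sq_nonneg ‖g‖]

/-- `s` is a sphere of radius `r` in an affine subspace of dimension `k`. -/
def IsSphereInFlat (k : ℕ) (r : ℝ) (s : Set E) : Prop :=
  ∃ (H : AffineSubspace ℝ E) (c : E), c ∈ H ∧ Module.finrank ℝ H.direction = k ∧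
    s = {x | x ∈ H ∧ ‖x - c‖ = r}

lemma isSphereInFlat_inner_eq_zero {H : AffineSubspace ℝ E} {c u : E} {k : ℕ} (hc : c ∈ H)
    (hH : Module.finrank ℝ H.direction = k + 1) (hu : u ∈ H.direction) (hu0 : u ≠ 0) (r : ℝ) :
    IsSphereInFlat k r {x | x ∈ H ∧ ⟪u, x - c⟫ = 0 ∧ ‖x - c‖ = r} := by
  have := FiniteDimensional.of_finrank_eq_succ hH
  refine ⟨AffineSubspace.mk' c ((ℝ ∙ u)ᗮ ⊓ H.direction), c, AffineSubspace.self_mem_mk' _ _, ?_, ?_⟩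
  · rw [AffineSubspace.direction_mk']
    refine Submodule.finrank_add_inf_finrank_orthogonal'
      ((Submodule.span_singleton_le_iff_mem u _).2 hu) ?_
    rw [finrank_span_singleton hu0, hH, add_comm]
  · ext x
    have hx : x ∈ H ↔ x - c ∈ H.direction := by
      rw [← vsub_eq_sub, AffineSubspace.vsub_right_mem_direction_iff_mem hc]
    simp only [Set.mem_ofPred_eq, AffineSubspace.mem_mk', Submodule.mem_inf,
      Submodule.mem_orthogonal_singleton_iff_inner_right, vsub_eq_sub, hx]
    tauto

lemma exists_norm_eq_one_sub_smul_mem_orthogonal {V : Submodule ℝ E} [FiniteDimensional ℝ V]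
    (hV : V ≠ ⊥) (y : E) : ∃ u ∈ V, ‖u‖ = 1 ∧ ∃ t ≥ (0 : ℝ), y - t • u ∈ Vᗮ := by
  by_cases hy : V.starProjection y = 0
  · obtain ⟨v, hv, hv0⟩ := V.ne_bot_iff.1 hV
    refine ⟨‖v‖⁻¹ • v, V.smul_mem _ hv, norm_smul_inv_norm hv0, 0, le_rfl, ?_⟩
    simpa [hy] using V.sub_starProjection_mem_orthogonal y
  · refine ⟨‖V.starProjection y‖⁻¹ • V.starProjection y,
      V.smul_mem _ (V.starProjection_apply_mem y), norm_smul_inv_norm hy,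
      ‖V.starProjection y‖, norm_nonneg _, ?_⟩
    rw [smul_inv_smul₀ (norm_ne_zero_iff.2 hy)]
    exact V.sub_starProjection_mem_orthogonal y

-- The slice lies on the far side of `c`, as seen from `p`, which keeps its center `c'` at distance
-- at least `a` from `p`.
lemma IsSphereInFlat.exists_slice {k : ℕ} {r r' a : ℝ} {s : Set E}
    (hs : IsSphereInFlat (k + 1) r s) (ha : 0 ≤ a) (hr : 0 ≤ r) (hr' : r' ^ 2 + a ^ 2 = r ^ 2)
    (p : E) : ∃ T ⊆ s, IsSphereInFlat k r' T ∧ ∃ c', a ≤ ‖p - c'‖ ∧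
      ∀ x ∈ T, ⟪p - c', x - c'⟫ = 0 ∧ ‖x - c'‖ = r' := by
  obtain ⟨H, c, hc, hH, rfl⟩ := hs
  have := FiniteDimensional.of_finrank_eq_succ hH
  have hV : H.direction ≠ ⊥ := Submodule.one_le_finrank_iff.1 (by omega)
  obtain ⟨u, hu, hu1, t, ht, hort⟩ := exists_norm_eq_one_sub_smul_mem_orthogonal hV (p - c)
  have hu0 : u ≠ 0 := fun h ↦ by simp [h] at hu1
  set c' := c - a • u with hc'_def
  have hc' : c' ∈ H := by
    rw [hc'_def, sub_eq_neg_add]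
    exact AffineSubspace.vadd_mem_of_mem_direction
      (H.direction.neg_mem (H.direction.smul_mem a hu)) hc
  have hpc' : p - c' = (p - c - t • u) + (t + a) • u := by
    rw [hc'_def]
    module
  refine ⟨_, ?_, isSphereInFlat_inner_eq_zero hc' hH hu hu0 r', c', ?_, ?_⟩
  · rintro x ⟨hx, hux, hxr⟩
    refine ⟨hx, (sq_eq_sq₀ (norm_nonneg _) hr).1 ?_⟩
    have hxc : x - c = (x - c') - a • u := by
      rw [hc'_def]
      module
    rw [hxc, norm_sub_sq_real, real_inner_smul_right, real_inner_comm, hux, hxr, norm_smul, hu1,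
      Real.norm_of_nonneg ha, ← hr']
    ring
  · have hinner : ⟪u, p - c'⟫ = t + a := by
      rw [hpc', inner_add_right, real_inner_smul_right, real_inner_self_eq_norm_sq, hu1,
        hort u hu]
      ring
    have := real_inner_le_norm u (p - c')
    rw [hinner, hu1, one_mul] at this
    linarith
  · rintro x ⟨hx, hux, hxr⟩
    refine ⟨?_, hxr⟩
    have hxV : x - c' ∈ H.direction := AffineSubspace.vsub_mem_direction hx hc'
    rw [hpc', inner_add_left, real_inner_smul_left, hux, mul_zero, add_zero]
    exact Submodule.inner_left_of_mem_orthogonal hxV hort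

end Spheres

section RadiusSequence

/-- The radius `√(α/μ - α²) (1 - μ²/L²)^(i/2)` of the `i`-th sphere, when the first gradient has
norm `1`. -/
def resistingRadius (μ L α : ℝ) (i : ℕ) : ℝ :=
  √(α / μ - α ^ 2) * √((1 - μ ^ 2 / L ^ 2) ^ i)

variable {μ L α : ℝ}

lemma one_sub_sq_div_sq_pos (hμ : 0 < μ) (hL : μ < L) : 0 < 1 - μ ^ 2 / L ^ 2 := by
  rw [sub_pos, div_lt_one (pow_pos (hμ.trans hL) 2)]
  exact pow_lt_pow_left₀ hL hμ.le two_ne_zero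

lemma div_sub_sq_pos (hα : 0 < α) (hα' : α < 1 / μ) : 0 < α / μ - α ^ 2 := by
  have : α * α < α * (1 / μ) := by gcongr
  rw [sub_pos, sq]
  simpa [div_eq_mul_inv] using this

lemma resistingRadius_pos (hμ : 0 < μ) (hL : μ < L) (hα : 0 < α) (hα' : α < 1 / μ) (i : ℕ) :
    0 < resistingRadius μ L α i :=
  mul_pos (Real.sqrt_pos.2 (div_sub_sq_pos hα hα'))
    (Real.sqrt_pos.2 (pow_pos (one_sub_sq_div_sq_pos hμ hL) i))

lemma resistingRadius_zero_sq (hα : 0 < α) (hα' : α < 1 / μ) :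
    resistingRadius μ L α 0 ^ 2 = α / μ - α ^ 2 := by
  simp [resistingRadius, Real.sq_sqrt (div_sub_sq_pos hα hα').le]

lemma resistingRadius_succ_sq (hμ : 0 < μ) (hL : μ < L) (α : ℝ) (i : ℕ) :
    resistingRadius μ L α (i + 1) ^ 2 =
      resistingRadius μ L α i ^ 2 * (1 - μ ^ 2 / L ^ 2) := by
  have hpos := one_sub_sq_div_sq_pos hμ hL
  rw [resistingRadius, resistingRadius, mul_pow, mul_pow, Real.sq_sqrt (pow_nonneg hpos.le _),
    Real.sq_sqrt (pow_nonneg hpos.le _), pow_succ _ i, mul_assoc]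

end RadiusSequence

lemma IsSphereInFlat.exists_slice_forall_isAdmissibleAnswer {E : Type*} [NormedAddCommGroup E]
    [InnerProductSpace ℝ E] {μ L r r' : ℝ} {k : ℕ} {s : Set E} (hμ : 0 < μ) (hL : μ < L)
    (hs : IsSphereInFlat (k + 1) r s) (hr : 0 < r) (hr' : r' ^ 2 = r ^ 2 * (1 - μ ^ 2 / L ^ 2))
    (p : E) : ∃ T ⊆ s, IsSphereInFlat k r' T ∧
      ∃ a, ∀ z ∈ T, IsAdmissibleAnswer μ L z p a := by
  have hL0 : 0 < L := hμ.trans hL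
  obtain ⟨T, hTs, hT, c, hpc, hTc⟩ := hs.exists_slice (a := r * μ / L) (r' := r') (by positivity)
    hr.le (by rw [hr']; ring) p
  have hpc_pos : 0 < ‖p - c‖ := lt_of_lt_of_le (by positivity) hpc
  set α := ‖p - c‖ ^ 2 / (μ * (‖p - c‖ ^ 2 + r' ^ 2)) with hα_def
  have hα_pos : 0 < α := by positivity
  have hα : μ / L ^ 2 ≤ α := by
    have hpc_le : r * μ ≤ ‖p - c‖ * L := (div_le_iff₀ hL0).1 hpc
    have hq := (one_sub_sq_div_sq_pos hμ hL).le
    rw [hα_def, div_le_div_iff₀ (by positivity) (by positivity)]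
    calc μ * (μ * (‖p - c‖ ^ 2 + r' ^ 2))
        = μ ^ 2 * ‖p - c‖ ^ 2 + (r * μ) ^ 2 * (1 - μ ^ 2 / L ^ 2) := by rw [hr']; ring
      _ ≤ μ ^ 2 * ‖p - c‖ ^ 2 + (‖p - c‖ * L) ^ 2 * (1 - μ ^ 2 / L ^ 2) := by gcongr
      _ = ‖p - c‖ ^ 2 * L ^ 2 := by field_simp; ring
  refine ⟨T, hTs, hT, _, fun z hz ↦ isAdmissibleAnswer_of_inner_eq_zero (c := c)
    (g := α⁻¹ • (p - c)) hμ hL0 hα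
    (smul_ne_zero (inv_ne_zero hα_pos.ne') (norm_pos_iff.1 hpc_pos))
    (smul_inv_smul₀ hα_pos.ne' _).symm ?_ ?_⟩
  · rw [real_inner_smul_left, (hTc z hz).1, mul_zero]
  · rw [(hTc z hz).2, norm_smul, norm_inv, Real.norm_of_nonneg hα_pos.le, hα_def]
    field_simp
    ring

namespace FirstOrderAlgorithm

variable {d : ℕ}

/-- The queries made by `A` from `x₀` when the oracle answers each query `p` with the pair
`(value, gradient) = O p`. -/
def iterates (A : FirstOrderAlgorithm d) (x₀ : EuclideanSpace ℝ (Fin d))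
    (O : EuclideanSpace ℝ (Fin d) → ℝ × EuclideanSpace ℝ (Fin d)) :
    ℕ → EuclideanSpace ℝ (Fin d)
  | 0 => x₀
  | n + 1 => A n fun k ↦ (iterates A x₀ O k, O (iterates A x₀ O k))

variable {A : FirstOrderAlgorithm d} {x₀ : EuclideanSpace ℝ (Fin d)}
  {O O' : EuclideanSpace ℝ (Fin d) → ℝ × EuclideanSpace ℝ (Fin d)}

lemma iterates_zero : A.iterates x₀ O 0 = x₀ := by
  rw [iterates]

lemma iterates_succ (n : ℕ) :
    A.iterates x₀ O (n + 1) =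
      A n fun k ↦ (A.iterates x₀ O k, O (A.iterates x₀ O k)) := by
  rw [iterates]

lemma iterates_congr {n : ℕ}
    (h : ∀ i < n, O' (A.iterates x₀ O i) = O (A.iterates x₀ O i)) :
    A.iterates x₀ O' n = A.iterates x₀ O n := by
  induction n using Nat.strong_induction_on with
  | _ n ih =>
    cases n with
    | zero => simp only [iterates_zero]
    | succ n =>
      have hprev (k : Fin (n + 1)) : A.iterates x₀ O' k = A.iterates x₀ O k :=
        ih k k.2 fun i hi ↦ h i (hi.trans k.2)
      simp only [iterates_succ, hprev, h _ (Fin.is_lt _)]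

lemma eq_iterates {x : ℕ → EuclideanSpace ℝ (Fin d)} (h0 : x 0 = x₀)
    (hsucc : ∀ n, x (n + 1) = A n fun k : Fin (n + 1) ↦ (x k, O (A.iterates x₀ O k))) (n : ℕ) :
    x n = A.iterates x₀ O n := by
  induction n using Nat.strong_induction_on with
  | _ n ih =>
    cases n with
    | zero => rw [h0, iterates_zero]
    | succ n =>
      have hprev (k : Fin (n + 1)) : x k = A.iterates x₀ O k := ih k k.2
      simp only [hsucc, iterates_succ, hprev]

end FirstOrderAlgorithm

section ResistingOracle

variable {d : ℕ}

/-- Up to query `n`, the oracle `O` resists the algorithm `A` started at `x₀`: each point of the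
sphere `S i` is still a possible minimizer after the answers to the queries `0, …, i`. -/
structure ResistsUpTo (μ L α : ℝ) (A : FirstOrderAlgorithm d) (x₀ : EuclideanSpace ℝ (Fin d))
    (n : ℕ) (O : EuclideanSpace ℝ (Fin d) → ℝ × EuclideanSpace ℝ (Fin d))
    (S : ℕ → Set (EuclideanSpace ℝ (Fin d))) : Prop where
  norm_gradient_first : ‖(O x₀).2‖ = 1
  antitoneOn : AntitoneOn S (Set.Iic n)
  isSphereInFlat : ∀ i ≤ n, IsSphereInFlat (d - i - 1) (resistingRadius μ L α i) (S i)
  isAdmissibleAnswer : ∀ i ≤ n, ∀ z ∈ S i,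
    IsAdmissibleAnswer μ L z (A.iterates x₀ O i) (O (A.iterates x₀ O i))

variable {μ L α : ℝ}

lemma exists_resistsUpTo_zero (hd : 0 < d) (hμ : 0 < μ) (hL : μ < L)
    (hα : α ∈ Set.Ico (μ / L ^ 2) (1 / μ)) (A : FirstOrderAlgorithm d)
    (x₀ : EuclideanSpace ℝ (Fin d)) : ∃ O S, ResistsUpTo μ L α A x₀ 0 O S := by
  have hα_pos : 0 < α := lt_of_lt_of_le (by have := hμ.trans hL; positivity) hα.1
  obtain ⟨e, he⟩ : ∃ e : EuclideanSpace ℝ (Fin d), ‖e‖ = 1 :=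
    ⟨EuclideanSpace.single ⟨0, hd⟩ 1, by simp⟩
  have he0 : e ≠ 0 := fun h ↦ by simp [h] at he
  refine ⟨fun _ ↦ ((μ + L) / 4 * (α / μ * ‖e‖ ^ 2), e),
    fun _ ↦ {x | x ∈ (⊤ : AffineSubspace ℝ (EuclideanSpace ℝ (Fin d))) ∧
      ⟪e, x - (x₀ - α • e)⟫ = 0 ∧ ‖x - (x₀ - α • e)‖ = resistingRadius μ L α 0},
    he, antitoneOn_const, ?_, ?_⟩
  · rintro i hi
    obtain rfl := Nat.le_zero.1 hi
    exact isSphereInFlat_inner_eq_zero (AffineSubspace.mem_top _ _ _)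
      (by rw [AffineSubspace.direction_top, finrank_top, finrank_euclideanSpace_fin]; omega)
      (by simp) he0 _
  · rintro i hi z ⟨-, hez, hz⟩
    obtain rfl := Nat.le_zero.1 hi
    rw [FirstOrderAlgorithm.iterates_zero]
    refine isAdmissibleAnswer_of_inner_eq_zero hμ (hμ.trans hL) hα.1 he0 (sub_sub_cancel _ _) hez ?_
    rw [hz, resistingRadius_zero_sq hα_pos hα.2, he, one_pow, mul_one]

variable {A : FirstOrderAlgorithm d} {x₀ : EuclideanSpace ℝ (Fin d)} {n : ℕ}
  {O : EuclideanSpace ℝ (Fin d) → ℝ × EuclideanSpace ℝ (Fin d)}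
  {S : ℕ → Set (EuclideanSpace ℝ (Fin d))} {T : Set (EuclideanSpace ℝ (Fin d))}
  {a : ℝ × EuclideanSpace ℝ (Fin d)}

-- A repeated query must get its old answer, which is already known to be admissible on `S n ⊇ T`.
lemma ResistsUpTo.exists_oracle (h : ResistsUpTo μ L α A x₀ n O S) (hT : T ⊆ S n)
    (ha : ∀ z ∈ T, IsAdmissibleAnswer μ L z (A.iterates x₀ O (n + 1)) a) :
    ∃ O' : EuclideanSpace ℝ (Fin d) → ℝ × EuclideanSpace ℝ (Fin d),
      (∀ i ≤ n, O' (A.iterates x₀ O i) = O (A.iterates x₀ O i)) ∧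
      ∀ z ∈ T, IsAdmissibleAnswer μ L z (A.iterates x₀ O (n + 1))
        (O' (A.iterates x₀ O (n + 1))) := by
  classical
  by_cases hvisited : ∃ i ≤ n, A.iterates x₀ O i = A.iterates x₀ O (n + 1)
  · obtain ⟨i, hi, hi_eq⟩ := hvisited
    refine ⟨O, fun _ _ ↦ rfl, fun z hz ↦ ?_⟩
    rw [← hi_eq]
    exact h.isAdmissibleAnswer i hi z (h.antitoneOn hi Set.self_mem_Iic hi (hT hz))
  · push Not at hvisited
    refine ⟨Function.update O (A.iterates x₀ O (n + 1)) a,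
      fun i hi ↦ Function.update_of_ne (hvisited i hi) .., fun z hz ↦ ?_⟩
    rw [Function.update_self]
    exact ha z hz

lemma ResistsUpTo.succ {O' : EuclideanSpace ℝ (Fin d) → ℝ × EuclideanSpace ℝ (Fin d)}
    (h : ResistsUpTo μ L α A x₀ n O S) (hT : T ⊆ S n)
    (hT_sphere : IsSphereInFlat (d - (n + 1) - 1) (resistingRadius μ L α (n + 1)) T)
    (hO' : ∀ i ≤ n, O' (A.iterates x₀ O i) = O (A.iterates x₀ O i))
    (hO'_succ : ∀ z ∈ T, IsAdmissibleAnswer μ L z (A.iterates x₀ O (n + 1))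
      (O' (A.iterates x₀ O (n + 1)))) :
    ResistsUpTo μ L α A x₀ (n + 1) O' (Function.update S (n + 1) T) := by
  have hS {i : ℕ} (hi : i ≤ n) : Function.update S (n + 1) T i = S i :=
    Function.update_of_ne (by omega) ..
  have hiter {i : ℕ} (hi : i ≤ n + 1) : A.iterates x₀ O' i = A.iterates x₀ O i :=
    FirstOrderAlgorithm.iterates_congr fun j hj ↦ hO' j (by omega)
  refine ⟨?_, fun i _ j hj hij ↦ ?_, fun i hi ↦ ?_, fun i hi z hz ↦ ?_⟩
  · have h0 := hO' 0 n.zero_le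
    rw [FirstOrderAlgorithm.iterates_zero] at h0
    rw [h0, h.norm_gradient_first]
  · rcases hij.eq_or_lt with rfl | hij
    · exact le_rfl
    have hi : i ≤ n := Nat.lt_succ_iff.1 (hij.trans_le hj)
    rw [hS hi]
    rcases Nat.le_add_one_iff.1 hj with hj | rfl
    · rw [hS hj]
      exact h.antitoneOn hi hj hij.le
    · rw [Function.update_self]
      exact hT.trans (h.antitoneOn hi Set.self_mem_Iic hi)
  · rcases Nat.le_add_one_iff.1 hi with hi | rfl
    · rw [hS hi]
      exact h.isSphereInFlat i hi
    · rwa [Function.update_self]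
  · rw [hiter hi]
    rcases Nat.le_add_one_iff.1 hi with hi | rfl
    · rw [hO' i hi]
      exact h.isAdmissibleAnswer i hi z (hS hi ▸ hz)
    · exact hO'_succ z (by rwa [Function.update_self] at hz)

lemma ResistsUpTo.exists_succ (hμ : 0 < μ) (hL : μ < L) (hα : α ∈ Set.Ico (μ / L ^ 2) (1 / μ))
    (hn : n + 1 < d) (h : ResistsUpTo μ L α A x₀ n O S) :
    ∃ O' S', ResistsUpTo μ L α A x₀ (n + 1) O' S' := by
  have hα_pos : 0 < α := lt_of_lt_of_le (by have := hμ.trans hL; positivity) hα.1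
  have hsphere : IsSphereInFlat (d - (n + 1) - 1 + 1) (resistingRadius μ L α n) (S n) := by
    have hdim : d - (n + 1) - 1 + 1 = d - n - 1 := by omega
    exact hdim ▸ h.isSphereInFlat n le_rfl
  obtain ⟨T, hTS, hT, a, ha⟩ := hsphere.exists_slice_forall_isAdmissibleAnswer hμ hL
    (resistingRadius_pos hμ hL hα_pos hα.2 n) (resistingRadius_succ_sq hμ hL α n)
    (A.iterates x₀ O (n + 1))
  obtain ⟨O', hO', hO'_succ⟩ := h.exists_oracle hTS ha
  exact ⟨O', _, h.succ hTS hT hO' hO'_succ⟩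

lemma exists_resistsUpTo (hμ : 0 < μ) (hL : μ < L) (hα : α ∈ Set.Ico (μ / L ^ 2) (1 / μ))
    (A : FirstOrderAlgorithm d) (x₀ : EuclideanSpace ℝ (Fin d)) {n : ℕ} (hn : n < d) :
    ∃ O S, ResistsUpTo μ L α A x₀ n O S := by
  induction n with
  | zero => exact exists_resistsUpTo_zero hn hμ hL hα A x₀
  | succ n ih =>
    obtain ⟨O, S, h⟩ := ih (by omega)
    exact h.exists_succ hμ hL hα hn

end ResistingOracle

lemma Icc_max_subset_Ico {μ L : ℝ} (hμ : 0 < μ) (hL : μ < L) :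
    Set.Icc (μ / L ^ 2) (max (μ / L ^ 2) (1 / (2 * μ))) ⊆ Set.Ico (μ / L ^ 2) (1 / μ) := by
  refine Set.Icc_subset_Ico_right (max_lt ?_ ?_)
  · rw [div_lt_div_iff₀ (by nlinarith) hμ]
    nlinarith
  · rw [one_div_lt_one_div (by positivity) hμ]
    linarith

theorem stmt_12_general {d : ℕ} (hd : 2 ≤ d) (μ L : ℝ) (hμ : 0 < μ) (hL : μ < L)
    (α₀ : ℝ) (hα₀ : α₀ ∈ Set.Ico (μ / L ^ 2) (1 / μ))
    (A : FirstOrderAlgorithm d) (x₀ : EuclideanSpace ℝ (Fin d)) :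
    ∃ (g : ℕ → EuclideanSpace ℝ (Fin d)) (fval : ℕ → ℝ)
      (S : ℕ → Set (EuclideanSpace ℝ (Fin d))),
      g 0 ≠ 0 ∧
      (∀ i j, i ≤ j → j ≤ d - 2 → S j ⊆ S i) ∧
      (∀ i ≤ d - 2,
        ∃ (H : AffineSubspace ℝ (EuclideanSpace ℝ (Fin d)))
          (c : EuclideanSpace ℝ (Fin d)), c ∈ H ∧
          Module.finrank ℝ H.direction = d - i - 1 ∧
          S i = {x | x ∈ H ∧
            ‖x - c‖ = Real.sqrt (α₀ / μ - α₀ ^ 2) * ‖g 0‖ *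
              Real.sqrt ((1 - μ ^ 2 / L ^ 2) ^ i)}) ∧
      (∀ x : ℕ → EuclideanSpace ℝ (Fin d), x 0 = x₀ →
        (∀ j, x (j + 1) =
          A j (fun k : Fin (j + 1) => (x k.val, fval k.val, g k.val))) →
        ∀ i ≤ d - 2, ∀ xs ∈ S i,
          ∃ f : EuclideanSpace ℝ (Fin d) → ℝ, MemRSIEB μ L f ∧
            argminSet f = {xs} ∧
            ∀ j ≤ i, gradient f (x j) = g j ∧ f (x j) = fval j) := by
  classical
  obtain ⟨O, S, h⟩ := exists_resistsUpTo hμ hL hα₀ A x₀ (n := d - 2) (by omega)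
  have hg0 : ‖(O (A.iterates x₀ O 0)).2‖ = 1 := by
    rw [FirstOrderAlgorithm.iterates_zero, h.norm_gradient_first]
  refine ⟨fun j ↦ (O (A.iterates x₀ O j)).2, fun j ↦ (O (A.iterates x₀ O j)).1, S,
    fun h0 ↦ by simp [h0] at hg0,
    fun i j hij hj ↦ h.antitoneOn (hij.trans hj) hj hij, fun i hi ↦ ?_,
    fun x hx0 hxsucc i hi xs hxs ↦ ?_⟩
  · simp only [hg0, mul_one]
    exact h.isSphereInFlat i hi
  · have hadm : ∀ p ∈ (Finset.range (i + 1)).image (A.iterates x₀ O),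
        IsAdmissibleAnswer μ L xs p (O p) := by
      simp only [Finset.forall_mem_image, Finset.mem_range, Nat.lt_succ_iff]
      exact fun j hj ↦ h.isAdmissibleAnswer j (hj.trans hi) xs
        (h.antitoneOn (hj.trans hi) hi hj hxs)
    obtain ⟨f, hf, hargmin, hinterp⟩ := exists_memRSIEB_of_isAdmissibleAnswer hμ hL hadm
    refine ⟨f, hf, hargmin, fun j hj ↦ ?_⟩
    rw [FirstOrderAlgorithm.eq_iterates (A := A) (O := O) hx0 hxsucc]
    exact hinterp _ (Finset.mem_image_of_mem _ (Finset.mem_range_succ_iff.2 hj))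

/-- Resisting-oracle lemma: for any first-order algorithm `A` and
starting point `x₀`, there are gradients `g i`, function values `fval i`, and nested
sets `S i` (for `i ≤ d − 2`) such that each `S i` is a sphere of radius
`r i = √(α₀/μ − α₀²)·‖g 0‖·(1 − μ²/L²)^{i/2}` centered at some `c i` inside an affine
subspace `H i` of dimension `d − i − 1`, and for each `i ≤ d − 2` and each `xs ∈ S i`
there is a function of `RSI⁻(μ) ∩ EB⁺(L)` minimized exactly at `xs` interpolating the
first `i + 1` iterates, values and gradients read by `A`. -/
theorem stmt_12 {d : ℕ} (hd : 2 ≤ d) (μ L : ℝ) (hμ : 0 < μ) (hL : μ < L)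
    (α₀ : ℝ) (hα₀ : α₀ ∈ Set.Icc (μ / L ^ 2) (max (μ / L ^ 2) (1 / (2 * μ))))
    (A : FirstOrderAlgorithm d) (x₀ : EuclideanSpace ℝ (Fin d)) :
    ∃ (g : ℕ → EuclideanSpace ℝ (Fin d)) (fval : ℕ → ℝ)
      (S : ℕ → Set (EuclideanSpace ℝ (Fin d))),
      g 0 ≠ 0 ∧
      (∀ i j, i ≤ j → j ≤ d - 2 → S j ⊆ S i) ∧
      (∀ i ≤ d - 2,
        ∃ (H : AffineSubspace ℝ (EuclideanSpace ℝ (Fin d)))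
          (c : EuclideanSpace ℝ (Fin d)), c ∈ H ∧
          Module.finrank ℝ H.direction = d - i - 1 ∧
          S i = {x | x ∈ H ∧
            ‖x - c‖ = Real.sqrt (α₀ / μ - α₀ ^ 2) * ‖g 0‖ *
              Real.sqrt ((1 - μ ^ 2 / L ^ 2) ^ i)}) ∧
      (∀ x : ℕ → EuclideanSpace ℝ (Fin d), x 0 = x₀ →
        (∀ j, x (j + 1) =
          A j (fun k : Fin (j + 1) => (x k.val, fval k.val, g k.val))) →
        ∀ i ≤ d - 2, ∀ xs ∈ S i,
          ∃ f : EuclideanSpace ℝ (Fin d) → ℝ, MemRSIEB μ L f ∧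
            argminSet f = {xs} ∧
            ∀ j ≤ i, gradient f (x j) = g j ∧ f (x j) = fval j) :=
  stmt_12_general hd μ L hμ hL α₀ (Icc_max_subset_Ico hμ hL hα₀) A x₀
end
end
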